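/- Fix m ∈ (−1,1) and suppose Assumption 1 holds. Then G is continuous and twice differentiable and: (1) G(0) = G'(0) = 0; (2) G''(λ) > 0 for all λ ∈ ℝ; (3) {G'(λ) : λ ∈ (0,∞)} = (0, ς); (4) there exists a continuous strictly increasing function λ̂ : [0,ς) → [0,∞) with G'(λ̂(a)) = a for all a ∈ [0,ς), λ̂(0) = 0 and λ̂((0,ς)) = (0,∞); (5) for every a ∈ (0,ς), G*(a) = a·λ̂(a) − G(λ̂(a)) and the derivative of G* satisfies Ġ*(a) = λ̂(a); (6) G* is strictly increasing on [0,ς); (7) {G*(a) : a ∈ (0,ς)} = (0,γ); (8) there exists a continuous strictly increasing function â : (0,γ) → (0,ς) with G*(â(c)) = c for all c ∈ (0,γ). -/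

import Mathlib

open MeasureTheory Real Filter Set
open scoped ENNReal Topology BigOperators

noncomputable section

/-- Assumption 1 of the paper, phrased for the law `μ` of `h₁`. -/
structure Assumption1 (μ : Measure ℝ) : Prop where
  isProb : IsProbabilityMeasure μ
  acPart : ¬ μ.MutuallySingular (volume : Measure ℝ)
  smallBall : ∃ ε > (0:ℝ), ∃ p₁ > (0:ℝ), ∀ t ∈ Set.Ico (0:ℝ) ε,
    (μ {x : ℝ | |x| < t}).toReal ≤ p₁ * t
  densityLB : ∃ c d p₂ : ℝ, c < d ∧ 0 < p₂ ∧
    ∀ s : Set ℝ, s ⊆ Set.Icc c d → MeasurableSet s →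
      ENNReal.ofReal p₂ * volume s ≤ μ s
  intAbs : Integrable (fun x : ℝ => |x|) μ
  intSq : Integrable (fun x : ℝ => x ^ 2) μ
  intCube : Integrable (fun x : ℝ => |x| ^ 3) μ

/-- `g(λ) = log(((1+m)/2)e^{λ(1−m)} + ((1−m)/2)e^{−λ(1+m)})`. -/
def gfun (m lam : ℝ) : ℝ :=
  Real.log ((1 + m) / 2 * Real.exp (lam * (1 - m)) + (1 - m) / 2 * Real.exp (-(lam * (1 + m))))

/-- `G(λ) = E[g(λ h₁)]`. -/
def Gf (μ : Measure ℝ) (m lam : ℝ) : ℝ := ∫ x, gfun m (lam * x) ∂μ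

/-- `G*(a) = sup_{λ∈ℝ}(λa − G(λ))`. -/
def Gstar (μ : Measure ℝ) (m a : ℝ) : ℝ := ⨆ lam : ℝ, (lam * a - Gf μ m lam)

/-- `ς = −m ψ₁ + ψ₃`. -/
def sigmaBar (μ : Measure ℝ) (m : ℝ) : ℝ := -m * ∫ x, x ∂μ + ∫ x, |x| ∂μ

/-- `γ = −E[log(1 + sign(h₁)m)] + log 2`. -/
def gammaBar (μ : Measure ℝ) (m : ℝ) : ℝ :=
  -(∫ x, Real.log (1 + Real.sign x * m) ∂μ) + Real.log 2

lemma aux_tangent (f f1 : ℝ → ℝ) (hd : ∀ x, HasDerivAt f (f1 x) x) (hmono : StrictMono f1)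
    (x y : ℝ) : f x + f1 x * (y - x) ≤ f y := by
  have hc : Continuous f := continuous_iff_continuousAt.2 fun x => (hd x).continuousAt
  rcases lt_trichotomy x y with h | h | h
  · obtain ⟨c, hc1, hc2⟩ := exists_hasDerivAt_eq_slope f f1 h hc.continuousOn (fun z _ => hd z)
    have h1 := hmono hc1.1
    have hne : y - x ≠ 0 := by linarith
    rw [eq_div_iff hne] at hc2
    nlinarith
  · subst h; simp
  · obtain ⟨c, hc1, hc2⟩ := exists_hasDerivAt_eq_slope f f1 h hc.continuousOn (fun z _ => hd z)
    have h1 := hmono hc1.2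
    have hne : x - y ≠ 0 := by linarith
    rw [eq_div_iff hne] at hc2
    nlinarith

lemma aux_image (f : ℝ → ℝ) (L : ℝ) (hc : Continuous f) (hm : StrictMonoOn f (Ici 0))
    (h0 : f 0 = 0) (hL : Tendsto f atTop (𝓝 L)) : f '' Ioi 0 = Ioo 0 L := by
  have hlt : ∀ x, 0 ≤ x → f x < L := by
    intro x hx
    have h1 : f x < f (x + 1) := hm hx (by simp; linarith) (by linarith)
    refine lt_of_lt_of_le h1 (ge_of_tendsto hL ?_)
    filter_upwards [eventually_ge_atTop (x + 1)] with y hy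
    exact hm.monotoneOn (by simp; linarith) (by simp; linarith) hy
  ext y
  constructor
  · rintro ⟨x, hx, rfl⟩
    have hx' : (0:ℝ) < x := hx
    refine ⟨?_, hlt x hx'.le⟩
    rw [← h0]
    exact hm (by simp) hx'.le hx'
  · rintro ⟨hy0, hyL⟩
    obtain ⟨b, hb, hb0⟩ := ((hL.eventually (lt_mem_nhds hyL)).and (eventually_gt_atTop 0)).exists
    have := intermediate_value_Ioo hb0.le hc.continuousOn (show y ∈ Ioo (f 0) (f b) by
      rw [h0]; exact ⟨hy0, hb⟩)
    obtain ⟨x, hx, hxy⟩ := this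
    exact ⟨x, hx.1, hxy⟩

lemma aux_main (G G1 G2 S : ℝ → ℝ) (σ γ : ℝ) (hS : ∀ a, S a = ⨆ l : ℝ, (l * a - G l))
    (hG : ∀ x, HasDerivAt G (G1 x) x) (hG1 : ∀ x, HasDerivAt G1 (G2 x) x)
    (hG2 : ∀ x, 0 < G2 x) (h0 : G 0 = 0) (h10 : G1 0 = 0)
    (hσ : Tendsto G1 atTop (𝓝 σ)) (hγ : Tendsto (fun l => l * G1 l - G l) atTop (𝓝 γ)) :
    (Continuous G ∧ Differentiable ℝ G ∧ Differentiable ℝ (deriv G)) ∧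
    (G 0 = 0 ∧ deriv G 0 = 0) ∧
    (∀ lam : ℝ, 0 < deriv (deriv G) lam) ∧
    deriv G '' (Set.Ioi 0) = Set.Ioo 0 σ ∧
    (∃ lamHat : ℝ → ℝ,
      ContinuousOn lamHat (Set.Ico 0 σ) ∧
      StrictMonoOn lamHat (Set.Ico 0 σ) ∧
      (∀ a ∈ Set.Ico 0 σ, 0 ≤ lamHat a ∧ deriv G (lamHat a) = a) ∧
      lamHat 0 = 0 ∧ lamHat '' (Set.Ioo 0 σ) = Set.Ioi 0 ∧
      (∀ a ∈ Set.Ioo 0 σ,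
        S a = a * lamHat a - G (lamHat a) ∧
        deriv S a = lamHat a)) ∧
    StrictMonoOn S (Set.Ico 0 σ) ∧
    S '' (Set.Ioo 0 σ) = Set.Ioo 0 γ ∧
    (∃ aHat : ℝ → ℝ,
      ContinuousOn aHat (Set.Ioo 0 γ) ∧
      StrictMonoOn aHat (Set.Ioo 0 γ) ∧
      ∀ c ∈ Set.Ioo 0 γ, aHat c ∈ Set.Ioo 0 σ ∧ S (aHat c) = c) := by
  have hdG : deriv G = G1 := funext fun x => (hG x).deriv
  have hdG1 : deriv G1 = G2 := funext fun x => (hG1 x).deriv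
  have hcG : Continuous G := continuous_iff_continuousAt.2 fun x => (hG x).continuousAt
  have hcG1 : Continuous G1 := continuous_iff_continuousAt.2 fun x => (hG1 x).continuousAt
  have hmono : StrictMono G1 := strictMono_of_deriv_pos (by rw [hdG1]; exact hG2)
  have himg : G1 '' Ioi 0 = Ioo 0 σ := aux_image G1 σ hcG1 (hmono.strictMonoOn _) h10 hσ
  have hKd : ∀ x, HasDerivAt (fun l => l * G1 l - G l) (x * G2 x) x := by
    intro x
    have := ((hasDerivAt_id x).mul (hG1 x)).sub (hG x)
    refine this.congr_deriv ?_
    simp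
  have hKc : Continuous (fun l => l * G1 l - G l) := by fun_prop
  have hKm : StrictMonoOn (fun l => l * G1 l - G l) (Ici 0) := by
    refine strictMonoOn_of_deriv_pos (convex_Ici 0) hKc.continuousOn ?_
    intro x hx
    rw [interior_Ici] at hx
    rw [(hKd x).deriv]
    exact mul_pos hx (hG2 x)
  have hKimg := aux_image _ γ hKc hKm (by simp [h0]) hγ
  have hSK : ∀ l, S (G1 l) = l * G1 l - G l := by
    intro l
    rw [hS]
    have hub : ∀ y, y * G1 l - G y ≤ l * G1 l - G l := by
      intro y
      have := aux_tangent G G1 hG hmono l y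
      linarith
    exact le_antisymm (ciSup_le hub) (le_ciSup (f := fun y => y * G1 l - G y)
      ⟨_, by rintro _ ⟨y, rfl⟩; exact hub y⟩ l)
  set lh : ℝ → ℝ := Function.invFun G1 with hlh
  have hl : ∀ x, lh (G1 x) = x := fun x => Function.leftInverse_invFun hmono.injective x
  have hlm : StrictMonoOn lh (range G1) := by
    rintro _ ⟨x, rfl⟩ _ ⟨y, rfl⟩ hxy
    rw [hl, hl]
    exact hmono.lt_iff_lt.1 hxy
  have hnh : ∀ x, range G1 ∈ 𝓝 (G1 x) := by
    intro x
    refine mem_of_superset (Icc_mem_nhds (hmono (sub_one_lt x)) (hmono (lt_add_one x))) ?_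
    exact (intermediate_value_Icc (by linarith) hcG1.continuousOn).trans (image_subset_range _ _)
  have hlc : ∀ x, ContinuousAt lh (G1 x) := by
    intro x
    refine hlm.continuousAt_of_image_mem_nhds (hnh x) ?_
    have : lh '' range G1 = univ := by
      ext y; simp only [mem_image, mem_range, mem_univ, iff_true]
      exact ⟨G1 y, ⟨y, rfl⟩, hl y⟩
    rw [this]; exact univ_mem
  have hIoo : ∀ a ∈ Ioo 0 σ, ∃ x, 0 < x ∧ G1 x = a := by
    intro a ha
    rw [← himg] at ha
    exact ha
  have hIco : ∀ a ∈ Ico 0 σ, ∃ x, 0 ≤ x ∧ G1 x = a := by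
    intro a ha
    rcases ha.1.eq_or_lt with h | h
    · exact ⟨0, le_rfl, by rw [h10, h]⟩
    · obtain ⟨x, hx, h⟩ := hIoo a ⟨h, ha.2⟩
      exact ⟨x, hx.le, h⟩
  have hsub : Ico 0 σ ⊆ range G1 := by
    intro a ha
    obtain ⟨x, _, h⟩ := hIco a ha
    exact ⟨x, h⟩
  have hSm : StrictMonoOn S (Ico 0 σ) := by
    intro a ha b hb hab
    obtain ⟨x, hx, rfl⟩ := hIco a ha
    obtain ⟨y, hy, rfl⟩ := hIco b hb
    rw [hSK, hSK]
    exact hKm hx hy (hmono.lt_iff_lt.1 hab)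
  have hSimg : S '' Ioo 0 σ = Ioo 0 γ := by
    rw [← himg, ← hKimg, image_image]
    simp only [hSK]
  refine ⟨⟨hcG, fun x => (hG x).differentiableAt, ?_⟩, ⟨h0, by rw [hdG, h10]⟩, ?_, ?_, ?_, hSm,
    hSimg, ?_⟩
  · rw [hdG]; exact fun x => (hG1 x).differentiableAt
  · rw [hdG, hdG1]; exact hG2
  · rw [hdG, himg]
  · refine ⟨lh, ?_, hlm.mono hsub, ?_, ?_, ?_, ?_⟩
    · intro a ha
      obtain ⟨x, hx, rfl⟩ := hIco a ha
      exact (hlc x).continuousWithinAt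
    · intro a ha
      obtain ⟨x, hx, rfl⟩ := hIco a ha
      rw [hl, hdG]; exact ⟨hx, rfl⟩
    · have := hl 0
      rwa [h10] at this
    · rw [← himg, image_image]
      simp only [hl, image_id']
    · intro a ha
      obtain ⟨x, hx, rfl⟩ := hIoo a ha
      refine ⟨by rw [hSK, hl, mul_comm], ?_⟩
      have hld : HasDerivAt lh (G2 x)⁻¹ (G1 x) := by
        refine HasDerivAt.of_local_left_inverse (f := G1) (hlc x) (by rw [hl]; exact hG1 x)
          (hG2 x).ne' ?_
        filter_upwards [hnh x]
        rintro _ ⟨y, rfl⟩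
        rw [hl]
      have hcomp : HasDerivAt (fun a => (fun l => l * G1 l - G l) (lh a)) (x * G2 x * (G2 x)⁻¹)
          (G1 x) := by
        refine HasDerivAt.comp (h₂ := fun l => l * G1 l - G l) (G1 x) ?_ hld
        rw [hl]; exact hKd x
      have heq : S =ᶠ[𝓝 (G1 x)] (fun a => (fun l => l * G1 l - G l) (lh a)) := by
        filter_upwards [hnh x]
        rintro _ ⟨y, rfl⟩
        simp only [hl, hSK]
      rw [(hcomp.congr_of_eventuallyEq heq).deriv, hl, mul_assoc, mul_inv_cancel₀ (hG2 x).ne',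
        mul_one]
  · have hSm' : StrictMonoOn S (Ioo 0 σ) := hSm.mono Ioo_subset_Ico_self
    have hmem : ∀ c ∈ Ioo 0 γ, Function.invFunOn S (Ioo 0 σ) c ∈ Ioo 0 σ ∧
        S (Function.invFunOn S (Ioo 0 σ) c) = c := by
      intro c hc
      rw [← hSimg] at hc
      exact ⟨Function.invFunOn_mem hc, Function.invFunOn_eq hc⟩
    have haM : StrictMonoOn (Function.invFunOn S (Ioo 0 σ)) (Ioo 0 γ) := by
      intro c hc d hd hcd
      have h1 := hmem c hc
      have h2 := hmem d hd
      rw [← hSm'.lt_iff_lt h1.1 h2.1, h1.2, h2.2]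
      exact hcd
    refine ⟨Function.invFunOn S (Ioo 0 σ), ?_, haM, hmem⟩
    intro c hc
    refine (haM.continuousAt_of_image_mem_nhds (isOpen_Ioo.mem_nhds hc) ?_).continuousWithinAt
    refine mem_of_superset (isOpen_Ioo.mem_nhds (hmem c hc).1) ?_
    intro a ha
    have hSa : S a ∈ Ioo 0 γ := by rw [← hSimg]; exact ⟨a, ha, rfl⟩
    refine ⟨S a, hSa, ?_⟩
    exact hSm'.injOn (hmem _ hSa).1 ha (hmem _ hSa).2

/-- derivative of `gfun`. -/
def g1fun (m x : ℝ) : ℝ :=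
  (1 - m) - (1 - m) * exp (-(2 * x)) / ((1 + m) / 2 + (1 - m) / 2 * exp (-(2 * x)))

/-- second derivative of `gfun`. -/
def g2fun (m x : ℝ) : ℝ :=
  (1 + m) * (1 - m) * exp (-(2 * x)) / ((1 + m) / 2 + (1 - m) / 2 * exp (-(2 * x))) ^ 2

lemma den_pos (m : ℝ) (hm : m ∈ Ioo (-1 : ℝ) 1) (x : ℝ) :
    0 < (1 + m) / 2 + (1 - m) / 2 * exp (-(2 * x)) := by
  obtain ⟨h1, h2⟩ := hm
  have := exp_pos (-(2 * x))
  have h3 : 0 < 1 + m := by linarith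
  have h4 : 0 < 1 - m := by linarith
  positivity

lemma gfun_eq (m : ℝ) (hm : m ∈ Ioo (-1 : ℝ) 1) (x : ℝ) :
    gfun m x = (1 - m) * x + log ((1 + m) / 2 + (1 - m) / 2 * exp (-(2 * x))) := by
  have h := den_pos m hm x
  have : (1 + m) / 2 * exp (x * (1 - m)) + (1 - m) / 2 * exp (-(x * (1 + m))) =
      exp ((1 - m) * x) * ((1 + m) / 2 + (1 - m) / 2 * exp (-(2 * x))) := by
    have : exp (-(x * (1 + m))) = exp ((1 - m) * x) * exp (-(2 * x)) := by
      rw [← exp_add]; congr 1; ring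
    rw [this, mul_comm x]; ring
  rw [gfun, this, log_mul (exp_pos _).ne' h.ne', log_exp]

lemma g1_hasDeriv (m : ℝ) (hm : m ∈ Ioo (-1 : ℝ) 1) (x : ℝ) :
    HasDerivAt (gfun m) (g1fun m x) x := by
  have h := den_pos m hm x
  have he : HasDerivAt (fun x : ℝ => exp (-(2 * x))) (exp (-(2 * x)) * (-(2 * 1))) x :=
    (((hasDerivAt_id x).const_mul 2).neg).exp
  have hd := (he.const_mul ((1 - m) / 2)).const_add ((1 + m) / 2)
  have := ((hasDerivAt_id x).const_mul (1 - m)).add (hd.log h.ne')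
  have e : gfun m = fun x => (1 - m) * x + log ((1 + m) / 2 + (1 - m) / 2 * exp (-(2 * x))) :=
    funext (gfun_eq m hm)
  rw [e]
  refine this.congr_deriv ?_
  rw [g1fun]; field_simp; ring

lemma g2_hasDeriv (m : ℝ) (hm : m ∈ Ioo (-1 : ℝ) 1) (x : ℝ) :
    HasDerivAt (g1fun m) (g2fun m x) x := by
  have h := den_pos m hm x
  have he : HasDerivAt (fun x : ℝ => exp (-(2 * x))) (exp (-(2 * x)) * (-(2 * 1))) x :=
    (((hasDerivAt_id x).const_mul 2).neg).exp
  have hd := (he.const_mul ((1 - m) / 2)).const_add ((1 + m) / 2)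
  have := ((he.const_mul (1 - m)).div hd h.ne').const_sub (1 - m)
  refine this.congr_deriv ?_
  rw [g2fun, ← neg_div]
  congr 1
  ring

lemma g2_pos (m : ℝ) (hm : m ∈ Ioo (-1 : ℝ) 1) (x : ℝ) : 0 < g2fun m x := by
  have h := den_pos m hm x
  obtain ⟨h1, h2⟩ := hm
  have h3 : 0 < 1 + m := by linarith
  have h4 : 0 < 1 - m := by linarith
  rw [g2fun]; positivity

lemma g2_le (m : ℝ) (hm : m ∈ Ioo (-1 : ℝ) 1) (x : ℝ) : g2fun m x ≤ 1 := by
  have h := den_pos m hm x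
  rw [g2fun, div_le_one (by positivity)]
  nlinarith [sq_nonneg ((1 + m) / 2 - (1 - m) / 2 * exp (-(2 * x)))]

lemma g1_bd (m : ℝ) (hm : m ∈ Ioo (-1 : ℝ) 1) (x : ℝ) : -(1 + m) ≤ g1fun m x ∧ g1fun m x ≤ 1 - m := by
  have h := den_pos m hm x
  obtain ⟨h1, h2⟩ := hm
  have h3 : 0 < 1 + m := by linarith
  have h4 : 0 < 1 - m := by linarith
  have e := exp_pos (-(2 * x))
  have a : (1 - m) * exp (-(2 * x)) / ((1 + m) / 2 + (1 - m) / 2 * exp (-(2 * x))) ≤ 2 := by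
    rw [div_le_iff₀ h]; linarith
  have b : 0 ≤ (1 - m) * exp (-(2 * x)) / ((1 + m) / 2 + (1 - m) / 2 * exp (-(2 * x))) := by
    positivity
  rw [g1fun]; constructor <;> linarith

lemma g1_abs (m : ℝ) (hm : m ∈ Ioo (-1 : ℝ) 1) (x : ℝ) : |g1fun m x| ≤ 2 := by
  have := g1_bd m hm x
  rw [abs_le]; constructor <;> linarith [hm.1, hm.2]

lemma gfun_zero (m : ℝ) : gfun m 0 = 0 := by
  have : (1 + m) / 2 + (1 - m) / 2 = 1 := by ring
  simp [gfun, this]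

lemma g1fun_zero (m : ℝ) : g1fun m 0 = 0 := by
  have : (1 + m) / 2 + (1 - m) / 2 = 1 := by ring
  simp [g1fun, this]

lemma gfun_neg (m x : ℝ) : gfun m (-x) = gfun (-m) x := by
  rw [gfun, gfun, add_comm]; congr 1; ring_nf

lemma g1_neg (m : ℝ) (hm : m ∈ Ioo (-1 : ℝ) 1) (x : ℝ) : g1fun m (-x) = -g1fun (-m) x := by
  have hm' : -m ∈ Ioo (-1 : ℝ) 1 := ⟨by linarith [hm.2], by linarith [hm.1]⟩
  have h1 := (g1_hasDeriv m hm (-x)).comp x (hasDerivAt_neg x)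
  have h2 := g1_hasDeriv (-m) hm' x
  have : gfun m ∘ Neg.neg = gfun (-m) := funext fun y => gfun_neg m y
  rw [this] at h1
  have := h1.unique h2
  linarith

lemma g1_mono (m : ℝ) (hm : m ∈ Ioo (-1 : ℝ) 1) : StrictMono (g1fun m) :=
  strictMono_of_deriv_pos fun x => by rw [(g2_hasDeriv m hm x).deriv]; exact g2_pos m hm x

lemma g1_cont (m : ℝ) (hm : m ∈ Ioo (-1 : ℝ) 1) : Continuous (g1fun m) :=
  continuous_iff_continuousAt.2 fun x => (g2_hasDeriv m hm x).continuousAt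

lemma g_cont (m : ℝ) (hm : m ∈ Ioo (-1 : ℝ) 1) : Continuous (gfun m) :=
  continuous_iff_continuousAt.2 fun x => (g1_hasDeriv m hm x).continuousAt

lemma g2_cont (m : ℝ) (hm : m ∈ Ioo (-1 : ℝ) 1) : Continuous (g2fun m) := by
  unfold g2fun
  refine Continuous.div (by fun_prop) (by fun_prop) fun x => (pow_pos (den_pos m hm x) 2).ne'

lemma g_abs (m : ℝ) (hm : m ∈ Ioo (-1 : ℝ) 1) (x : ℝ) : |gfun m x| ≤ 2 * |x| := by
  have h1 := aux_tangent _ _ (g1_hasDeriv m hm) (g1_mono m hm) x 0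
  have h2 := aux_tangent _ _ (g1_hasDeriv m hm) (g1_mono m hm) 0 x
  rw [gfun_zero] at h1 h2
  rw [g1fun_zero] at h2
  have h3 : |g1fun m x * x| ≤ 2 * |x| := by
    rw [abs_mul]; exact mul_le_mul_of_nonneg_right (g1_abs m hm x) (abs_nonneg x)
  have h4 := le_abs_self (g1fun m x * x)
  rw [abs_of_nonneg (by linarith)]
  linarith

/-- `k(x) = x g'(x) - g(x)`. -/
def kfun (m x : ℝ) : ℝ := x * g1fun m x - gfun m x

lemma k_nonneg (m : ℝ) (hm : m ∈ Ioo (-1 : ℝ) 1) (x : ℝ) : 0 ≤ kfun m x := by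
  have h1 := aux_tangent _ _ (g1_hasDeriv m hm) (g1_mono m hm) x 0
  rw [gfun_zero] at h1
  rw [kfun]; linarith

lemma k_neg (m : ℝ) (hm : m ∈ Ioo (-1 : ℝ) 1) (x : ℝ) : kfun m (-x) = kfun (-m) x := by
  rw [kfun, kfun, g1_neg m hm, gfun_neg]; ring

lemma k_le_aux (m : ℝ) (hm : m ∈ Ioo (-1 : ℝ) 1) (x : ℝ) (hx : 0 ≤ x) :
    kfun m x ≤ -log ((1 + m) / 2) := by
  have h1 := (g1_bd m hm x).2
  have h3 : 0 < 1 + m := by linarith [hm.1]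
  have h4 : 0 < 1 - m := by linarith [hm.2]
  have h2 : log ((1 + m) / 2) ≤ log ((1 + m) / 2 + (1 - m) / 2 * exp (-(2 * x))) := by
    apply log_le_log (by positivity)
    have : 0 < (1 - m) / 2 * exp (-(2 * x)) := by positivity
    linarith
  rw [kfun, gfun_eq m hm]
  nlinarith

lemma k_le (m : ℝ) (hm : m ∈ Ioo (-1 : ℝ) 1) (x : ℝ) :
    |kfun m x| ≤ |log ((1 + m) / 2)| + |log ((1 + -m) / 2)| := by
  have hm' : -m ∈ Ioo (-1 : ℝ) 1 := ⟨by linarith [hm.2], by linarith [hm.1]⟩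
  rw [abs_of_nonneg (k_nonneg m hm x)]
  have a1 := neg_le_abs (log ((1 + m) / 2))
  have a2 := neg_le_abs (log ((1 + -m) / 2))
  have b1 := abs_nonneg (log ((1 + m) / 2))
  have b2 := abs_nonneg (log ((1 + -m) / 2))
  rcases le_total 0 x with h | h
  · have := k_le_aux m hm x h
    linarith
  · have := k_le_aux (-m) hm' (-x) (by linarith)
    rw [← k_neg m hm, neg_neg] at this
    linarith

lemma exp_tend : Tendsto (fun x : ℝ => exp (-(2 * x))) atTop (𝓝 0) :=
  tendsto_exp_neg_atTop_nhds_zero.comp (tendsto_id.const_mul_atTop (by norm_num : (0:ℝ) < 2))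

lemma xexp_tend : Tendsto (fun x : ℝ => x * exp (-(2 * x))) atTop (𝓝 0) := by
  have := ((tendsto_pow_mul_exp_neg_atTop_nhds_zero 1).comp
    (tendsto_id.const_mul_atTop (by norm_num : (0:ℝ) < 2))).const_mul (1 / 2)
  rw [mul_zero] at this
  refine this.congr fun x => ?_
  simp; ring

lemma den_tend (m : ℝ) : Tendsto (fun x : ℝ => (1 + m) / 2 + (1 - m) / 2 * exp (-(2 * x))) atTop
    (𝓝 ((1 + m) / 2)) := by
  have := (exp_tend.const_mul ((1 - m) / 2)).const_add ((1 + m) / 2)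
  simpa using this

lemma g1_tend (m : ℝ) (hm : m ∈ Ioo (-1 : ℝ) 1) : Tendsto (g1fun m) atTop (𝓝 (1 - m)) := by
  have h3 : (1 + m) / 2 ≠ 0 := by linarith [hm.1]
  have := ((exp_tend.const_mul (1 - m)).div (den_tend m) h3).const_sub (1 - m)
  simp only [mul_zero, zero_div, sub_zero] at this
  exact this

lemma k_tend (m : ℝ) (hm : m ∈ Ioo (-1 : ℝ) 1) :
    Tendsto (kfun m) atTop (𝓝 (-log ((1 + m) / 2))) := by
  have h3 : (1 + m) / 2 ≠ 0 := by linarith [hm.1]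
  have := (((xexp_tend.const_mul (1 - m)).div (den_tend m) h3).neg).sub ((den_tend m).log h3)
  simp only [mul_zero, zero_div, neg_zero, zero_sub] at this
  refine this.congr fun x => ?_
  rw [kfun, gfun_eq m hm, g1fun]
  simp only [Pi.div_apply]
  ring

lemma g1_tend_mul (m : ℝ) (hm : m ∈ Ioo (-1 : ℝ) 1) (x : ℝ) :
    Tendsto (fun l => x * g1fun m (l * x)) atTop (𝓝 (-m * x + |x|)) := by
  have hm' : -m ∈ Ioo (-1 : ℝ) 1 := ⟨by linarith [hm.2], by linarith [hm.1]⟩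
  rcases lt_trichotomy x 0 with h | h | h
  · have := ((g1_tend (-m) hm').comp
      (tendsto_id.atTop_mul_const (neg_pos.2 h))).const_mul (-x)
    rw [abs_of_neg h]
    convert this using 2
    · simp only [Function.comp, id]
      rw [← neg_neg (g1fun (-m) _), ← g1_neg m hm]
      ring_nf
    · ring
  · subst h; simp
  · have := ((g1_tend m hm).comp (tendsto_id.atTop_mul_const h)).const_mul x
    rw [abs_of_pos h, show -m * x + x = x * (1 - m) by ring]
    exact this

lemma k_tend_mul (m : ℝ) (hm : m ∈ Ioo (-1 : ℝ) 1) (x : ℝ) (hx : x ≠ 0) :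
    Tendsto (fun l => kfun m (l * x)) atTop (𝓝 (-log (1 + Real.sign x * m) + log 2)) := by
  have hm' : -m ∈ Ioo (-1 : ℝ) 1 := ⟨by linarith [hm.2], by linarith [hm.1]⟩
  rcases lt_or_gt_of_ne hx with h | h
  · have := ((k_tend (-m) hm').comp (tendsto_id.atTop_mul_const (neg_pos.2 h)))
    rw [Real.sign_of_neg h]
    have h3 : 1 + -m ≠ 0 := by linarith [hm.2]
    rw [log_div h3 (by norm_num)] at this
    convert this using 2
    · simp only [Function.comp, id]
      rw [← k_neg m hm]
      ring_nf
    · ring_nf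
  · have := ((k_tend m hm).comp (tendsto_id.atTop_mul_const h))
    rw [Real.sign_of_pos h]
    have h3 : 1 + m ≠ 0 := by linarith [hm.1]
    rw [log_div h3 (by norm_num)] at this
    rw [one_mul, show -log (1 + m) + log 2 = -(log (1 + m) - log 2) by ring]
    exact this

lemma ae_ne_zero (μ : Measure ℝ) (hAss : Assumption1 μ) : ∀ᵐ x ∂μ, x ≠ 0 := by
  have := hAss.isProb
  obtain ⟨ε, hε, p, hp, h⟩ := hAss.smallBall
  have hz : μ.real {0} ≤ 0 := by
    have ht : Tendsto (fun t : ℝ => p * t) (𝓝[>] 0) (𝓝 0) := by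
      have : Tendsto (fun t : ℝ => p * t) (𝓝 0) (𝓝 (p * 0)) := by
        exact (continuous_const.mul continuous_id).tendsto 0
      rw [mul_zero] at this
      exact this.mono_left nhdsWithin_le_nhds
    refine ge_of_tendsto ht ?_
    filter_upwards [Ioo_mem_nhdsGT hε] with t ht
    refine le_trans ?_ (h t ⟨ht.1.le, ht.2⟩)
    exact measureReal_mono (by intro x hx; simp at hx; subst hx; simpa using ht.1)
  have hz' : μ {0} = 0 := by
    have := le_antisymm hz measureReal_nonneg
    rwa [measureReal_eq_zero_iff] at this
  rw [ae_iff]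
  simpa using hz'

/-- analytical properties of `G` and of its Fenchel–Legendre transform
`G*` under Assumption 1. -/
theorem stmt17 (μ : Measure ℝ) (hAss : Assumption1 μ) (m : ℝ)
    (hm : m ∈ Set.Ioo (-1 : ℝ) 1) :
    -- continuity and twice differentiability
    (Continuous (Gf μ m) ∧ Differentiable ℝ (Gf μ m) ∧
      Differentiable ℝ (deriv (Gf μ m))) ∧
    -- (1)
    (Gf μ m 0 = 0 ∧ deriv (Gf μ m) 0 = 0) ∧
    -- (2)
    (∀ lam : ℝ, 0 < deriv (deriv (Gf μ m)) lam) ∧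
    -- (3)
    deriv (Gf μ m) '' (Set.Ioi 0) = Set.Ioo 0 (sigmaBar μ m) ∧
    -- (4) and (5)
    (∃ lamHat : ℝ → ℝ,
      ContinuousOn lamHat (Set.Ico 0 (sigmaBar μ m)) ∧
      StrictMonoOn lamHat (Set.Ico 0 (sigmaBar μ m)) ∧
      (∀ a ∈ Set.Ico 0 (sigmaBar μ m),
        0 ≤ lamHat a ∧ deriv (Gf μ m) (lamHat a) = a) ∧
      lamHat 0 = 0 ∧ lamHat '' (Set.Ioo 0 (sigmaBar μ m)) = Set.Ioi 0 ∧
      (∀ a ∈ Set.Ioo 0 (sigmaBar μ m),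
        Gstar μ m a = a * lamHat a - Gf μ m (lamHat a) ∧
        deriv (Gstar μ m) a = lamHat a)) ∧
    -- (6)
    StrictMonoOn (Gstar μ m) (Set.Ico 0 (sigmaBar μ m)) ∧
    -- (7)
    Gstar μ m '' (Set.Ioo 0 (sigmaBar μ m)) = Set.Ioo 0 (gammaBar μ m) ∧
    -- (8)
    (∃ aHat : ℝ → ℝ,
      ContinuousOn aHat (Set.Ioo 0 (gammaBar μ m)) ∧
      StrictMonoOn aHat (Set.Ioo 0 (gammaBar μ m)) ∧
      ∀ c ∈ Set.Ioo 0 (gammaBar μ m),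
        aHat c ∈ Set.Ioo 0 (sigmaBar μ m) ∧ Gstar μ m (aHat c) = c) := by
  have hP := hAss.isProb
  have hid : Integrable (fun x : ℝ => x) μ := by
    refine hAss.intAbs.mono' (by fun_prop) ?_
    exact ae_of_all _ fun x => le_rfl
  have habs2 : Integrable (fun x : ℝ => 2 * |x|) μ := hAss.intAbs.const_mul 2
  have hgi : ∀ l, Integrable (fun x => gfun m (l * x)) μ := by
    intro l
    refine (hAss.intAbs.const_mul (2 * |l|)).mono'
      ((g_cont m hm).comp (by fun_prop)).aestronglyMeasurable (ae_of_all _ fun x => ?_)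
    have := g_abs m hm (l * x)
    rw [abs_mul] at this
    rw [norm_eq_abs]; linarith
  have hg1c : ∀ l, Continuous (fun x => x * g1fun m (l * x)) := fun l =>
    continuous_id.mul ((g1_cont m hm).comp (by fun_prop))
  have hg2c : ∀ l, Continuous (fun x => x ^ 2 * g2fun m (l * x)) := fun l =>
    (continuous_pow 2).mul ((g2_cont m hm).comp (by fun_prop))
  have hb1 : ∀ l x : ℝ, ‖x * g1fun m (l * x)‖ ≤ 2 * |x| := by
    intro l x
    rw [norm_eq_abs, abs_mul, mul_comm]
    exact mul_le_mul_of_nonneg_right (g1_abs m hm _) (abs_nonneg x)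
  have hb2 : ∀ l x : ℝ, ‖x ^ 2 * g2fun m (l * x)‖ ≤ x ^ 2 := by
    intro l x
    rw [norm_eq_abs, abs_of_nonneg (mul_nonneg (sq_nonneg x) (g2_pos m hm _).le)]
    exact mul_le_of_le_one_right (sq_nonneg x) (g2_le m hm _)
  have hg1i : ∀ l, Integrable (fun x => x * g1fun m (l * x)) μ := fun l =>
    habs2.mono' (hg1c l).aestronglyMeasurable (ae_of_all _ (hb1 l))
  have hlin : ∀ l x : ℝ, HasDerivAt (fun l : ℝ => l * x) x l := fun l x => by
    simpa using (hasDerivAt_id l).mul_const x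
  have hd1 : ∀ l, HasDerivAt (Gf μ m) (∫ x, x * g1fun m (l * x) ∂μ) l := by
    intro l
    refine (hasDerivAt_integral_of_dominated_loc_of_deriv_le (F := fun l x => gfun m (l * x))
      (F' := fun l x => x * g1fun m (l * x)) (bound := fun x => 2 * |x|) univ_mem
      (Eventually.of_forall fun l => (hgi l).aestronglyMeasurable) (hgi l)
      (hg1c l).aestronglyMeasurable (ae_of_all _ fun x l _ => hb1 l x) habs2
      (ae_of_all _ fun x l _ => ?_)).2
    rw [mul_comm x]
    exact HasDerivAt.comp (h₂ := gfun m) l (g1_hasDeriv m hm (l * x)) (hlin l x)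
  have hd2 : ∀ l, Integrable (fun x => x ^ 2 * g2fun m (l * x)) μ ∧
      HasDerivAt (fun l => ∫ x, x * g1fun m (l * x) ∂μ) (∫ x, x ^ 2 * g2fun m (l * x) ∂μ) l := by
    intro l
    refine (hasDerivAt_integral_of_dominated_loc_of_deriv_le (F := fun l x => x * g1fun m (l * x))
      (F' := fun l x => x ^ 2 * g2fun m (l * x)) (bound := fun x => x ^ 2) univ_mem
      (Eventually.of_forall fun l => (hg1i l).aestronglyMeasurable) (hg1i l)
      (hg2c l).aestronglyMeasurable (ae_of_all _ fun x l _ => hb2 l x) hAss.intSq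
      (ae_of_all _ fun x l _ => ?_))
    refine (((g2_hasDeriv m hm (l * x)).comp l (hlin l x)).const_mul x).congr_deriv ?_
    ring
  have hne := ae_ne_zero μ hAss
  refine aux_main (Gf μ m) (fun l => ∫ x, x * g1fun m (l * x) ∂μ)
    (fun l => ∫ x, x ^ 2 * g2fun m (l * x) ∂μ) (Gstar μ m) (sigmaBar μ m) (gammaBar μ m)
    (fun a => rfl) hd1 (fun l => (hd2 l).2) ?_ ?_ ?_ ?_ ?_
  · intro l
    rw [integral_pos_iff_support_of_nonneg
      (fun x => mul_nonneg (sq_nonneg x) (g2_pos m hm _).le) (hd2 l).1]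
    have : Function.support (fun x => x ^ 2 * g2fun m (l * x)) =ᵐ[μ] univ := by
      rw [eventuallyEq_univ]
      filter_upwards [hne] with x hx
      exact (mul_pos (by positivity) (g2_pos m hm _)).ne'
    rw [measure_congr this, measure_univ]
    exact one_pos
  · simp [Gf, gfun_zero]
  · simp [g1fun_zero]
  · have : sigmaBar μ m = ∫ x, (-m * x + |x|) ∂μ := by
      rw [integral_add (hid.const_mul _) hAss.intAbs, integral_const_mul, sigmaBar]
    rw [this]
    exact tendsto_integral_filter_of_dominated_convergence (fun x => 2 * |x|)
      (Eventually.of_forall fun l => (hg1c l).aestronglyMeasurable)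
      (Eventually.of_forall fun l => ae_of_all _ (hb1 l)) habs2
      (ae_of_all _ (g1_tend_mul m hm))
  · have hK : (fun l => l * (∫ x, x * g1fun m (l * x) ∂μ) - Gf μ m l) =
        fun l => ∫ x, kfun m (l * x) ∂μ := by
      funext l
      rw [Gf, ← integral_const_mul, ← integral_sub ((hg1i l).const_mul l) (hgi l)]
      congr 1
      funext x
      rw [kfun]; ring
    have hkc : ∀ l : ℝ, Continuous (fun x => kfun m (l * x)) := fun l =>
      ((continuous_id.mul (g1_cont m hm)).sub (g_cont m hm)).comp (by fun_prop)
    have hmain : Tendsto (fun l => ∫ x, kfun m (l * x) ∂μ) atTop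
        (𝓝 (∫ x, (-log (1 + Real.sign x * m) + log 2) ∂μ)) := by
      refine tendsto_integral_filter_of_dominated_convergence
        (fun _ => |log ((1 + m) / 2)| + |log ((1 + -m) / 2)|)
        (Eventually.of_forall fun l => (hkc l).aestronglyMeasurable)
        (Eventually.of_forall fun l => ae_of_all _ fun x => k_le m hm _) (integrable_const _) ?_
      filter_upwards [hne] with x hx using k_tend_mul m hm x hx
    have hsm : Measurable Real.sign := by
      unfold Real.sign
      exact Measurable.ite measurableSet_Iio measurable_const
        (Measurable.ite measurableSet_Ioi measurable_const measurable_const)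
    have hli : Integrable (fun x => log (1 + Real.sign x * m)) μ := by
      refine (integrable_const (|log (1 + m)| + |log (1 + -m)|)).mono'
        (measurable_log.comp ((hsm.mul_const m).const_add 1)).aestronglyMeasurable
        (ae_of_all _ fun x => ?_)
      have b1 := abs_nonneg (log (1 + m))
      have b2 := abs_nonneg (log (1 + -m))
      rw [norm_eq_abs]
      rcases Real.sign_apply_eq x with h | h | h <;> rw [h]
      · rw [neg_one_mul]; linarith
      · simp; positivity
      · rw [one_mul]; linarith
    have : gammaBar μ m = ∫ x, (-log (1 + Real.sign x * m) + log 2) ∂μ := by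
      rw [integral_add (f := fun x => -log (1 + Real.sign x * m)) hli.neg (integrable_const _), integral_neg, gammaBar]
      simp
    rw [hK, this]
    exact hmain
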